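/- Let ψ : [0,∞) → [0,∞). The following three conditions are equivalent: (1) ψ is ultrametric preserving (for every ultrametric space (X,d), the function ψ∘d is an ultrametric on X) and ψ is continuous at 0; (2) for every nonempty totally bounded ultrametric space (X,d), ψ∘d is an ultrametric on X and the space (X, ψ∘d) is totally bounded; (3) for every ultrametric space (X,d), ψ∘d is an ultrametric on X and the metrics d and ψ∘d generate the same topology on X (for every x ∈ X and ε > 0 there is δ > 0 with {y : d(x,y) < δ} ⊆ {y : ψ(d(x,y)) < ε}, and conversely). -/

import Mathlib

/-! A map `ψ` preserves ultrametrics if and only if it is monotone and vanishes exactly at `0`: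
sufficiency is immediate, and the triangles with sides `a ≤ b = b` give necessity. For such a `ψ`,
continuity at `0` means that `ψ` takes arbitrarily small values on `(0, ∞)`, and then small
`d`-distances and small `ψ ∘ d`-distances control each other. Conversely, a failure of continuity is
visible in a single totally bounded space: the points `0` and `1 / n`, with distinct points at
distance their maximum. If `ψ ≥ ε` on `(0, ∞)`, this space becomes `ε`-separated, so it is neither
totally bounded nor does `1 / n` still converge to `0`. -/

/-- `d` is an ultrametric on `X`: nonnegative, symmetric, vanishing exactly on
the diagonal and satisfying the strong triangle inequality. -/
def IsUltrametricFn {X : Type*} (d : X → X → ℝ) : Prop :=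
  (∀ x y, 0 ≤ d x y) ∧ (∀ x y, d x y = d y x) ∧ (∀ x y, d x y = 0 ↔ x = y) ∧
    (∀ x y z, d x y ≤ max (d x z) (d z y))

/-- `(X,d)` is totally bounded: for every `r > 0` finitely many open `d`-balls
of radius `r` cover `X`. -/
def TotallyBoundedFn {X : Type*} (d : X → X → ℝ) : Prop :=
  ∀ r : ℝ, 0 < r → ∃ s : Finset X, ∀ x : X, ∃ a ∈ s, d x a < r

open Set Filter Topology

universe u

variable {X : Type*} {ψ : ℝ → ℝ}

theorem IsUltrametricFn.totallyBoundedFn_of_finite [Finite X] {d : X → X → ℝ}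
    (hd : IsUltrametricFn d) : TotallyBoundedFn d := by
  have := Fintype.ofFinite X
  obtain ⟨-, -, eq_zero, -⟩ := hd
  exact fun r hr => ⟨Finset.univ, fun x => ⟨x, Finset.mem_univ x, by rwa [(eq_zero x x).2 rfl]⟩⟩

theorem TotallyBoundedFn.of_forall_lt {d d' : X → X → ℝ} (hd : TotallyBoundedFn d)
    (h : ∀ ε, 0 < ε → ∃ δ, 0 < δ ∧ ∀ x y, d x y < δ → d' x y < ε) : TotallyBoundedFn d' := by
  intro ε hε
  obtain ⟨δ, hδ, hdd'⟩ := h ε hε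
  obtain ⟨s, hs⟩ := hd δ hδ
  refine ⟨s, fun x => ?_⟩
  obtain ⟨a, ha, hxa⟩ := hs x
  exact ⟨a, ha, hdd' x a hxa⟩

/-- A monotone amenable function: it is increasing on `[0, ∞)` and vanishes there exactly at `0`.
These are the functions that preserve ultrametrics. Values at negative reals are unconstrained. -/
structure IsMonotoneAmenable (ψ : ℝ → ℝ) : Prop where
  map_zero : ψ 0 = 0
  map_pos : ∀ ⦃t⦄, 0 < t → 0 < ψ t
  monotoneOn : MonotoneOn ψ (Ici 0)

namespace IsMonotoneAmenable

theorem map_nonneg (hψ : IsMonotoneAmenable ψ) {t : ℝ} (ht : 0 ≤ t) : 0 ≤ ψ t :=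
  hψ.map_zero ▸ hψ.monotoneOn self_mem_Ici ht ht

theorem map_eq_zero_iff (hψ : IsMonotoneAmenable ψ) {t : ℝ} (ht : 0 ≤ t) : ψ t = 0 ↔ t = 0 := by
  refine ⟨fun hψt => ?_, fun h => h ▸ hψ.map_zero⟩
  by_contra hne
  exact (hψ.map_pos (ht.lt_of_ne' hne)).ne' hψt

theorem isUltrametricFn_comp (hψ : IsMonotoneAmenable ψ) {d : X → X → ℝ}
    (hd : IsUltrametricFn d) : IsUltrametricFn fun x y => ψ (d x y) := by
  obtain ⟨nonneg, comm, eq_zero, le_max⟩ := hd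
  refine ⟨fun x y => hψ.map_nonneg (nonneg x y), fun x y => congrArg ψ (comm x y),
    fun x y => (hψ.map_eq_zero_iff (nonneg x y)).trans (eq_zero x y), fun x y z => ?_⟩
  calc ψ (d x y) ≤ ψ (max (d x z) (d z y)) :=
        hψ.monotoneOn (nonneg x y) (le_max_of_le_left (nonneg x z)) (le_max x y z)
    _ = max (ψ (d x z)) (ψ (d z y)) := hψ.monotoneOn.map_max (nonneg x z) (nonneg z y)

theorem continuousWithinAt_zero_iff (hψ : IsMonotoneAmenable ψ) :
    ContinuousWithinAt ψ (Ici 0) 0 ↔ ∀ ε, 0 < ε → ∃ t, 0 < t ∧ ψ t < ε := by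
  constructor
  · intro hcont ε hε
    have hsmall : ∀ᶠ t in 𝓝[>] 0, ψ t < ε :=
      (hcont.mono Ioi_subset_Ici_self).eventually_lt_const (hψ.map_zero.symm ▸ hε)
    exact (eventually_mem_nhdsWithin.and hsmall).exists
  · intro h
    rw [ContinuousWithinAt, hψ.map_zero]
    refine tendsto_order.2 ⟨fun a ha => ?_, fun ε hε => ?_⟩
    · filter_upwards [self_mem_nhdsWithin] with t ht using ha.trans_le (hψ.map_nonneg ht)
    · obtain ⟨δ, hδ, hψδ⟩ := h ε hε
      filter_upwards [Icc_mem_nhdsGE hδ] with t ht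
      exact (hψ.monotoneOn ht.1 hδ.le ht.2).trans_lt hψδ

theorem exists_forall_lt_of_continuousWithinAt (hψ : IsMonotoneAmenable ψ)
    (hcont : ContinuousWithinAt ψ (Ici 0) 0) {ε : ℝ} (hε : 0 < ε) :
    ∃ δ, 0 < δ ∧ ∀ t, 0 ≤ t → t < δ → ψ t < ε := by
  obtain ⟨δ, hδ, hψδ⟩ := hψ.continuousWithinAt_zero_iff.1 hcont ε hε
  exact ⟨δ, hδ, fun t ht htδ => (hψ.monotoneOn ht hδ.le htδ.le).trans_lt hψδ⟩

end IsMonotoneAmenable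

open Classical in
/-- The distance on `X` for which two distinct points lie at the maximum of their values under `f`.
It supplies the test spaces on which a function preserving ultrametrics is evaluated. -/
noncomputable def maxDist (f : X → ℝ) (x y : X) : ℝ :=
  if x = y then 0 else max (f x) (f y)

theorem maxDist_self (f : X → ℝ) (x : X) : maxDist f x x = 0 :=
  if_pos rfl

theorem maxDist_of_ne (f : X → ℝ) {x y : X} (h : x ≠ y) : maxDist f x y = max (f x) (f y) :=
  if_neg h

theorem maxDist_comm (f : X → ℝ) (x y : X) : maxDist f x y = maxDist f y x := by
  obtain rfl | hxy := eq_or_ne x y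
  · rfl
  · rw [maxDist_of_ne f hxy, maxDist_of_ne f hxy.symm, max_comm]

theorem maxDist_nonneg {f : X → ℝ} (hf : ∀ x, 0 ≤ f x) (x y : X) : 0 ≤ maxDist f x y := by
  unfold maxDist
  split_ifs
  exacts [le_rfl, le_max_of_le_left (hf x)]

theorem maxDist_le_max {f : X → ℝ} (hf : ∀ x, 0 ≤ f x) (x y z : X) :
    maxDist f x y ≤ max (maxDist f x z) (maxDist f z y) := by
  obtain rfl | hxy := eq_or_ne x y
  · exact (maxDist_self f x).trans_le (le_max_of_le_left (maxDist_nonneg hf x z))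
  obtain rfl | hxz := eq_or_ne x z
  · exact le_max_right _ _
  obtain rfl | hzy := eq_or_ne z y
  · exact le_max_left _ _
  rw [maxDist_of_ne f hxy, maxDist_of_ne f hxz, maxDist_of_ne f hzy]
  exact max_le_max (le_max_left _ _) (le_max_right _ _)

theorem isUltrametricFn_maxDist {f : X → ℝ} (hf : ∀ x, 0 ≤ f x)
    (hzero : (f ⁻¹' {0}).Subsingleton) : IsUltrametricFn (maxDist f) := by
  refine ⟨maxDist_nonneg hf, maxDist_comm f, fun x y => ⟨fun h => ?_, ?_⟩, maxDist_le_max hf⟩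
  · by_contra hxy
    rw [maxDist_of_ne f hxy] at h
    have hx : f x = 0 := ((le_max_left _ _).trans_eq h).antisymm (hf x)
    have hy : f y = 0 := ((le_max_right _ _).trans_eq h).antisymm (hf y)
    exact hxy (hzero hx hy)
  · rintro rfl
    exact maxDist_self f x

theorem totallyBoundedFn_maxDist {f : X → ℝ} (hf : Tendsto f cofinite (𝓝 0)) :
    TotallyBoundedFn (maxDist f) := by
  intro r hr
  have hfin : {x | ¬ f x < r}.Finite := hf.eventually_lt_const hr
  have self_lt (x : X) : maxDist f x x < r := by rwa [maxDist_self]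
  by_cases hall : ∀ x, ¬ f x < r
  · exact ⟨hfin.toFinset, fun x => ⟨x, hfin.mem_toFinset.2 (hall x), self_lt x⟩⟩
  classical
  push Not at hall
  obtain ⟨a, ha⟩ := hall
  refine ⟨insert a hfin.toFinset, fun x => ?_⟩
  by_cases hx : f x < r
  · refine ⟨a, Finset.mem_insert_self _ _, ?_⟩
    obtain rfl | hxa := eq_or_ne x a
    · exact self_lt x
    · exact (maxDist_of_ne f hxa).trans_lt (max_lt hx ha)
  · exact ⟨x, Finset.mem_insert_of_mem (hfin.mem_toFinset.2 hx), self_lt x⟩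

theorem isMonotoneAmenable_of_preserves_finite
    (h : ∀ (X : Type u) (d : X → X → ℝ) [Finite X] [Nonempty X], IsUltrametricFn d →
      IsUltrametricFn fun x y => ψ (d x y)) :
    IsMonotoneAmenable ψ := by
  have triangle {a b : ℝ} (ha : 0 < a) (hab : a ≤ b) : ψ 0 = 0 ∧ 0 < ψ a ∧ ψ a ≤ ψ b := by
    have hb : 0 < b := ha.trans_le hab
    let f : ULift.{u} (Fin 3) → ℝ := fun i => ![0, a, b] i.down
    have hf (i) : 0 ≤ f i := by
      obtain ⟨i⟩ := i
      fin_cases i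
      exacts [le_rfl, ha.le, hb.le]
    have hzero : (f ⁻¹' {0}).Subsingleton := by
      rintro ⟨i⟩ hi ⟨j⟩ hj
      fin_cases i <;> fin_cases j <;> simp_all [f, ha.ne', hb.ne']
    have h₀₁ : maxDist f ⟨0⟩ ⟨1⟩ = a := by simp [maxDist, f, ha.le]
    have h₀₂ : maxDist f ⟨0⟩ ⟨2⟩ = b := by simp [maxDist, f, hb.le]
    have h₂₁ : maxDist f ⟨2⟩ ⟨1⟩ = b := by simp [maxDist, f, hab]
    obtain ⟨nonneg, -, eq_zero, le_max⟩ := h _ _ (isUltrametricFn_maxDist hf hzero)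
    refine ⟨?_, lt_of_le_of_ne' ?_ ?_, ?_⟩
    · simpa only [maxDist_self] using (eq_zero ⟨0⟩ ⟨0⟩).2 rfl
    · simpa only [h₀₁] using nonneg ⟨0⟩ ⟨1⟩
    · simpa [h₀₁] using eq_zero ⟨0⟩ ⟨1⟩
    · simpa only [h₀₁, h₀₂, h₂₁, max_self] using le_max ⟨0⟩ ⟨1⟩ ⟨2⟩
  have map_zero : ψ 0 = 0 := (triangle one_pos le_rfl).1
  have map_pos {t : ℝ} (ht : 0 < t) : 0 < ψ t := (triangle ht le_rfl).2.1
  refine ⟨map_zero, fun _ => map_pos, fun a ha b _ hab => ?_⟩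
  obtain rfl | ha : 0 = a ∨ 0 < a := (mem_Ici.1 ha).eq_or_lt
  · obtain rfl | hb := hab.eq_or_lt
    exacts [le_rfl, map_zero.trans_le (map_pos hb).le]
  · exact (triangle ha hab).2.2

theorem preserves_ultrametrics_iff :
    (∀ (X : Type u) (d : X → X → ℝ), IsUltrametricFn d →
      IsUltrametricFn fun x y => ψ (d x y)) ↔ IsMonotoneAmenable ψ :=
  ⟨fun h => isMonotoneAmenable_of_preserves_finite fun X d _ _ => h X d,
    fun hψ _ _ => hψ.isUltrametricFn_comp⟩

/-- The points `0` and `1 / n`, `n ≥ 1`, as values of a function to which `maxDist` applies: this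
yields a totally bounded space with a non-isolated point. The index `0` stands for the limit point
`0`, by the convention `0⁻¹ = 0`. -/
noncomputable def reciprocal (n : ULift.{u} ℕ) : ℝ :=
  (n.down : ℝ)⁻¹

theorem reciprocal_nonneg (n : ULift.{u} ℕ) : 0 ≤ reciprocal n :=
  inv_nonneg.2 n.down.cast_nonneg

theorem reciprocal_eq_zero_iff {n : ULift.{u} ℕ} : reciprocal n = 0 ↔ n = ⟨0⟩ := by
  simp [reciprocal, ULift.ext_iff]

theorem reciprocal_pos {n : ULift.{u} ℕ} (hn : n ≠ ⟨0⟩) : 0 < reciprocal n :=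
  (reciprocal_nonneg n).lt_of_ne' (reciprocal_eq_zero_iff.not.2 hn)

theorem tendsto_reciprocal_cofinite : Tendsto reciprocal.{u} cofinite (𝓝 0) := by
  have h : Tendsto (fun n : ℕ => (n : ℝ)⁻¹) cofinite (𝓝 0) :=
    Nat.cofinite_eq_atTop ▸ tendsto_inv_atTop_nhds_zero_nat
  exact h.comp ULift.down_injective.tendsto_cofinite

theorem isUltrametricFn_maxDist_reciprocal : IsUltrametricFn (maxDist reciprocal.{u}) :=
  isUltrametricFn_maxDist reciprocal_nonneg fun _ hm _ hn =>
    (reciprocal_eq_zero_iff.1 hm).trans (reciprocal_eq_zero_iff.1 hn).symm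

theorem exists_pos_lt_of_totallyBoundedFn
    (h : TotallyBoundedFn fun m n => ψ (maxDist reciprocal.{u} m n)) {ε : ℝ} (hε : 0 < ε) :
    ∃ t, 0 < t ∧ ψ t < ε := by
  classical
  obtain ⟨s, hs⟩ := h ε hε
  obtain ⟨n, hn⟩ := Infinite.exists_notMem_finset (insert ⟨0⟩ s)
  rw [Finset.mem_insert, not_or] at hn
  obtain ⟨a, ha, hlt⟩ := hs n
  have hna : n ≠ a := fun h => hn.2 (h ▸ ha)
  have hpos : 0 < maxDist reciprocal n a := by
    rw [maxDist_of_ne _ hna]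
    exact lt_max_of_lt_left (reciprocal_pos hn.1)
  exact ⟨maxDist reciprocal n a, hpos, hlt⟩

theorem exists_pos_lt_of_ball_zero_subset {δ ε : ℝ} (hδ : 0 < δ)
    (h : ∀ n, maxDist reciprocal.{u} ⟨0⟩ n < δ → ψ (maxDist reciprocal.{u} ⟨0⟩ n) < ε) :
    ∃ t, 0 < t ∧ ψ t < ε := by
  have hnear : ∀ᶠ n in cofinite, reciprocal.{u} n < δ :=
    tendsto_reciprocal_cofinite.eventually_lt_const hδ
  obtain ⟨n, hnδ, hn⟩ := (hnear.and (eventually_cofinite_ne ⟨0⟩)).exists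
  have hdist : maxDist reciprocal ⟨0⟩ n = reciprocal n := by
    rw [maxDist_of_ne _ hn.symm, reciprocal_eq_zero_iff.2 rfl, max_eq_right (reciprocal_nonneg n)]
  exact ⟨reciprocal n, reciprocal_pos hn, hdist ▸ h n (hdist.trans_lt hnδ)⟩

theorem preserves_totallyBounded_iff :
    (∀ (X : Type u) (d : X → X → ℝ), Nonempty X → IsUltrametricFn d → TotallyBoundedFn d →
      IsUltrametricFn (fun x y => ψ (d x y)) ∧ TotallyBoundedFn fun x y => ψ (d x y)) ↔
    IsMonotoneAmenable ψ ∧ ContinuousWithinAt ψ (Ici 0) 0 := by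
  constructor
  · intro h
    have hψ : IsMonotoneAmenable ψ := isMonotoneAmenable_of_preserves_finite fun X d _ hX hd =>
      (h X d hX hd hd.totallyBoundedFn_of_finite).1
    have htb := (h _ _ ⟨⟨0⟩⟩ isUltrametricFn_maxDist_reciprocal
      (totallyBoundedFn_maxDist tendsto_reciprocal_cofinite)).2
    exact ⟨hψ, hψ.continuousWithinAt_zero_iff.2 fun ε => exists_pos_lt_of_totallyBoundedFn htb⟩
  · rintro ⟨hψ, hcont⟩ X d - hd htb
    refine ⟨hψ.isUltrametricFn_comp hd, htb.of_forall_lt fun ε hε => ?_⟩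
    obtain ⟨δ, hδ, hlt⟩ := hψ.exists_forall_lt_of_continuousWithinAt hcont hε
    exact ⟨δ, hδ, fun x y => hlt _ (hd.1 x y)⟩

theorem preserves_topology_iff :
    (∀ (X : Type u) (d : X → X → ℝ), IsUltrametricFn d →
      IsUltrametricFn (fun x y => ψ (d x y)) ∧
      ∀ (x : X) (ε : ℝ), 0 < ε →
        (∃ δ : ℝ, 0 < δ ∧ ∀ y : X, d x y < δ → ψ (d x y) < ε) ∧
        (∃ δ : ℝ, 0 < δ ∧ ∀ y : X, ψ (d x y) < δ → d x y < ε)) ↔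
    IsMonotoneAmenable ψ ∧ ContinuousWithinAt ψ (Ici 0) 0 := by
  constructor
  · intro h
    have hψ : IsMonotoneAmenable ψ := preserves_ultrametrics_iff.1 fun X d hd => (h X d hd).1
    refine ⟨hψ, hψ.continuousWithinAt_zero_iff.2 fun ε hε => ?_⟩
    obtain ⟨δ, hδ, hball⟩ := ((h _ _ isUltrametricFn_maxDist_reciprocal).2 ⟨0⟩ ε hε).1
    exact exists_pos_lt_of_ball_zero_subset hδ hball
  · rintro ⟨hψ, hcont⟩ X d hd
    refine ⟨hψ.isUltrametricFn_comp hd, fun x ε hε => ⟨?_, ψ ε, hψ.map_pos hε, fun y => ?_⟩⟩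
    · obtain ⟨δ, hδ, hlt⟩ := hψ.exists_forall_lt_of_continuousWithinAt hcont hε
      exact ⟨δ, hδ, fun y => hlt _ (hd.1 x y)⟩
    · exact hψ.monotoneOn.reflect_lt (hd.1 x y) hε.le

/-- A function `ψ : [0,∞) → [0,∞)` is ultrametric preserving and continuous at
`0` iff it preserves total boundedness of ultrametric spaces iff it preserves
every ultrametric together with its topology. -/
theorem preserving_totally_bounded_ultrametrics (ψ : ℝ → ℝ)
    (hψ : ∀ t : ℝ, 0 ≤ t → 0 ≤ ψ t) :
    (((∀ (X : Type) (d : X → X → ℝ), IsUltrametricFn d →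
          IsUltrametricFn (fun x y : X => ψ (d x y))) ∧
        ContinuousWithinAt ψ (Set.Ici 0) 0) ↔
      (∀ (X : Type) (d : X → X → ℝ), Nonempty X → IsUltrametricFn d →
        TotallyBoundedFn d →
          IsUltrametricFn (fun x y : X => ψ (d x y)) ∧
          TotallyBoundedFn (fun x y : X => ψ (d x y)))) ∧
    ((∀ (X : Type) (d : X → X → ℝ), Nonempty X → IsUltrametricFn d →
        TotallyBoundedFn d →
          IsUltrametricFn (fun x y : X => ψ (d x y)) ∧
          TotallyBoundedFn (fun x y : X => ψ (d x y))) ↔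
      (∀ (X : Type) (d : X → X → ℝ), IsUltrametricFn d →
        IsUltrametricFn (fun x y : X => ψ (d x y)) ∧
        ∀ (x : X) (ε : ℝ), 0 < ε →
          (∃ δ : ℝ, 0 < δ ∧ ∀ y : X, d x y < δ → ψ (d x y) < ε) ∧
          (∃ δ : ℝ, 0 < δ ∧ ∀ y : X, ψ (d x y) < δ → d x y < ε))) := by
  rw [preserves_ultrametrics_iff, preserves_totallyBounded_iff, preserves_topology_iff]
  exact ⟨Iff.rfl, Iff.rfl⟩
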